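/- arXiv:2107.07575 — 2 statements merged into one kernel-verified Lean document; each statement's English description precedes it below -/
import Mathlib

section
/- For a unit fraction α, the test with rejection region R_mm satisfies inf over all (δ_x, δ_y) with δ_x δ_y ≠ 0 of P_{(δ_x, δ_y)}((Z_x, Z_y) ∈ R_mm) = α, where (Z_x, Z_y) ~ N((δ_x, δ_y), I₂). -/
open MeasureTheory ProbabilityTheory Set Filter Pointwise

/-- The standard normal cumulative distribution function Φ. -/
noncomputable def stdPhi (x : ℝ) : ℝ := ((gaussianReal 0 1) (Set.Iic x)).toReal

/-- The inverse Φ⁻¹ of the standard normal CDF. -/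
noncomputable def stdPhiInv : ℝ → ℝ := Function.invFun stdPhi

/-- The law of (Z_x, Z_y) ~ N((dx, dy), I₂). -/
noncomputable def gauss2 (dx dy : ℝ) : Measure (ℝ × ℝ) :=
  (gaussianReal dx 1).prod (gaussianReal dy 1)


/-- a_k = Φ⁻¹(k·α/2) where α = 1/N. -/
noncomputable def aseq (N k : ℕ) : ℝ := stdPhiInv ((k : ℝ) / (2 * N))

/-- The interval (a_{k-1}, a_k), with a_0 = -∞ and a_{2N} = ∞. -/
noncomputable def band (N k : ℕ) : Set ℝ :=
  if k = 1 then Set.Iio (aseq N 1)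
  else if k = 2 * N then Set.Ioi (aseq N (2 * N - 1))
  else Set.Ioo (aseq N (k - 1)) (aseq N k)

/-- The minimax rejection region R_mm: diagonal and anti-diagonal open squares. -/
noncomputable def Rmm (N : ℕ) : Set (ℝ × ℝ) :=
  (⋃ k ∈ Finset.Icc 1 (2 * N), band N k ×ˢ band N k) ∪
  (⋃ k ∈ Finset.Icc 1 (2 * N), band N k ×ˢ (-(band N k)))

namespace MM

/-- The law of one coordinate, real-valued. -/
noncomputable def P (d : ℝ) (S : Set ℝ) : ℝ := (gaussianReal d 1).real S

instance noAtomsG (d : ℝ) : NullSingletonClass (gaussianReal d 1) :=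
  nullSingletonClass_gaussianReal one_ne_zero

lemma stdPhi_eq (x : ℝ) : stdPhi x = P 0 (Iic x) := rfl

lemma stdPhi_eq_cdf : stdPhi = cdf (gaussianReal 0 1) := by
  funext x
  rw [cdf_eq_real]; rfl

lemma P_Ioc {a b : ℝ} (h : a ≤ b) : P 0 (Ioc a b) = stdPhi b - stdPhi a := by
  rw [stdPhi_eq, stdPhi_eq, P, P, P,
    show Ioc a b = Iic b \ Iic a by ext z; simp [and_comm], measureReal_sdiff (Iic_subset_Iic.2 h) measurableSet_Iic]

lemma P_Ioo {a b : ℝ} (h : a ≤ b) : P 0 (Ioo a b) = stdPhi b - stdPhi a := by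
  rw [← P_Ioc h]; exact measureReal_congr Ioo_ae_eq_Ioc

lemma P_Iio (a : ℝ) : P 0 (Iio a) = stdPhi a := by
  rw [stdPhi_eq]; exact measureReal_congr Iio_ae_eq_Iic

lemma P_Ioi (a : ℝ) : P 0 (Ioi a) = 1 - stdPhi a := by
  rw [stdPhi_eq, P, P, ← compl_Iic, probReal_compl_eq_one_sub measurableSet_Iic]

lemma P_neg (d : ℝ) {S : Set ℝ} (hS : MeasurableSet S) : P d (-S) = P (-d) S := by
  unfold P
  rw [← gaussianReal_map_neg, map_measureReal_apply measurable_neg hS]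
  rfl

lemma stdPhi_neg (x : ℝ) : stdPhi (-x) = 1 - stdPhi x := by
  rw [← P_Ioi, ← P_Iio, ← neg_Ioi, P_neg _ measurableSet_Ioi, neg_zero]

lemma stdPhi_zero : stdPhi 0 = 1 / 2 := by
  have := stdPhi_neg 0
  rw [neg_zero] at this
  linarith

lemma P_pos (d : ℝ) {S : Set ℝ} (hS : volume S ≠ 0) : 0 < P d S := by
  unfold P
  rw [measureReal_def, ENNReal.toReal_pos_iff]
  refine ⟨pos_iff_ne_zero.2 fun h => hS ?_, measure_lt_top _ _⟩
  exact gaussianReal_absolutelyContinuous' d one_ne_zero h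

lemma stdPhi_strictMono : StrictMono stdPhi := by
  intro a b h
  have h1 := P_Ioo h.le
  have h2 : 0 < P 0 (Ioo a b) := P_pos 0 (by simp [h])
  linarith

lemma stdPhi_pos (x : ℝ) : 0 < stdPhi x := P_pos 0 (by simp)

lemma stdPhi_lt_one (x : ℝ) : stdPhi x < 1 := by
  have := stdPhi_pos (-x)
  rw [stdPhi_neg] at this; linarith

lemma stdPhi_continuous : Continuous stdPhi := by
  rw [stdPhi_eq_cdf, continuous_iff_continuousAt]
  intro x
  rw [(monotone_cdf (gaussianReal 0 1)).continuousAt_iff_leftLim_eq_rightLim]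
  have h1 : (cdf (gaussianReal 0 1)).measure {x} = 0 := by
    rw [measure_cdf]; simp
  rw [StieltjesFunction.measure_singleton, ENNReal.ofReal_eq_zero] at h1
  rw [StieltjesFunction.rightLim_eq]
  exact le_antisymm ((monotone_cdf _).leftLim_le le_rfl) (by linarith)

lemma stdPhi_inv {t : ℝ} (h0 : 0 < t) (h1 : t < 1) : stdPhi (stdPhiInv t) = t := by
  apply Function.invFun_eq
  have hb := tendsto_cdf_atBot (gaussianReal 0 1)
  have ht := tendsto_cdf_atTop (gaussianReal 0 1)
  rw [← stdPhi_eq_cdf] at hb ht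
  obtain ⟨a, ha⟩ := (hb.eventually_lt_const h0).exists
  obtain ⟨b, hb⟩ := (ht.eventually_const_lt h1).exists
  exact mem_range_of_exists_le_of_exists_ge stdPhi_continuous ⟨a, ha.le⟩ ⟨b, hb.le⟩

lemma stdPhi_aseq {N k : ℕ} (h0 : 0 < k) (h1 : k < 2 * N) :
    stdPhi (aseq N k) = (k : ℝ) / (2 * N) := by
  have h0' : (0 : ℝ) < k := by exact_mod_cast h0
  have h1' : (k : ℝ) < 2 * N := by exact_mod_cast h1
  exact stdPhi_inv (by apply div_pos <;> linarith) (by rw [div_lt_one] <;> linarith)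

lemma mem_band {N k : ℕ} (h0 : 1 ≤ k) (h1 : k ≤ 2 * N) (z : ℝ) :
    z ∈ band N k ↔ ((k : ℝ) - 1) / (2 * N) < stdPhi z ∧ stdPhi z < (k : ℝ) / (2 * N) := by
  have hN : (0 : ℝ) < 2 * N := by
    have : 0 < 2 * N := by omega
    exact_mod_cast this
  have e1 : 2 ≤ k → stdPhi (aseq N (k-1)) = ((k:ℝ) - 1) / (2 * N) := fun h => by
    rw [stdPhi_aseq (by omega) (by omega), Nat.cast_sub h0, Nat.cast_one]
  have e2 : k < 2 * N → stdPhi (aseq N k) = (k:ℝ) / (2 * N) := fun h => stdPhi_aseq (by omega) h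
  unfold band
  split_ifs with ha hb
  · subst ha
    rw [← e2 (by omega), stdPhi_strictMono.lt_iff_lt]
    simp [stdPhi_pos]
  · rw [← e1 (by omega), stdPhi_strictMono.lt_iff_lt, ← hb]
    have : (k : ℝ) / (2 * N) = 1 := by rw [hb]; push_cast; exact div_self hN.ne'
    rw [this]
    simp [stdPhi_lt_one]
  · rw [← e1 (by omega), ← e2 (by omega), stdPhi_strictMono.lt_iff_lt, stdPhi_strictMono.lt_iff_lt]
    rfl

lemma meas_band (N k : ℕ) : MeasurableSet (band N k) := by
  unfold band
  split_ifs <;> measurability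

lemma P_band {N k : ℕ} (h0 : 1 ≤ k) (h1 : k ≤ 2 * N) : P 0 (band N k) = 1 / (2 * N) := by
  have hN : (0 : ℝ) < 2 * N := by
    have : 0 < 2 * N := by omega
    exact_mod_cast this
  have e1 : 2 ≤ k → stdPhi (aseq N (k-1)) = ((k:ℝ) - 1) / (2 * N) := fun h => by
    rw [stdPhi_aseq (by omega) (by omega), Nat.cast_sub h0, Nat.cast_one]
  have e2 : k < 2 * N → stdPhi (aseq N k) = (k:ℝ) / (2 * N) := fun h => stdPhi_aseq (by omega) h
  unfold band
  split_ifs with ha hb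
  · subst ha
    rw [P_Iio, e2 (by omega)]; simp
  · rw [P_Ioi, ← hb, e1 (by omega)]
    have : (k : ℝ) = 2 * N := by rw [hb]; push_cast; rfl
    rw [this]
    rw [sub_div, div_self hN.ne']; ring
  · have : aseq N (k-1) ≤ aseq N k := by
      rw [← stdPhi_strictMono.le_iff_le, e1 (by omega), e2 (by omega)]
      gcongr; linarith
    rw [P_Ioo this, e1 (by omega), e2 (by omega)]
    ring

lemma band_eq_of_mem {N k l : ℕ} (hk0 : 1 ≤ k) (hk1 : k ≤ 2 * N) (hl0 : 1 ≤ l) (hl1 : l ≤ 2 * N)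
    {z : ℝ} (hk : z ∈ band N k) (hl : z ∈ band N l) : k = l := by
  have hN : (0 : ℝ) < 2 * N := by
    have : 0 < 2 * N := by omega
    exact_mod_cast this
  rw [mem_band hk0 hk1] at hk
  rw [mem_band hl0 hl1] at hl
  have h1 := (div_lt_div_iff_of_pos_right hN).1 (hk.1.trans hl.2)
  have h2 := (div_lt_div_iff_of_pos_right hN).1 (hl.1.trans hk.2)
  have h1' : (k : ℝ) < (l + 1 : ℕ) := by push_cast; linarith
  have h2' : (l : ℝ) < (k + 1 : ℕ) := by push_cast; linarith
  rw [Nat.cast_lt] at h1' h2'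
  omega

lemma neg_band {N k : ℕ} (h0 : 1 ≤ k) (h1 : k ≤ 2 * N) : -(band N k) = band N (2 * N + 1 - k) := by
  have hN : (0 : ℝ) < 2 * N := by
    have : 0 < 2 * N := by omega
    exact_mod_cast this
  ext z
  rw [Set.mem_neg, mem_band h0 h1, mem_band (by omega) (by omega), stdPhi_neg,
    Nat.cast_sub (by omega)]
  push_cast
  rw [div_lt_iff₀ hN, lt_div_iff₀ hN, div_lt_iff₀ hN, lt_div_iff₀ hN]
  constructor <;> rintro ⟨a, b⟩ <;> constructor <;> linarith

lemma disj_band (N : ℕ) : PairwiseDisjoint (↑(Finset.Icc 1 (2 * N))) (band N) := by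
  intro k hk l hl hkl
  simp only [Finset.coe_Icc, mem_Icc] at hk hl
  rw [Function.onFun, Set.disjoint_left]
  exact fun z hz hz' => hkl (band_eq_of_mem hk.1 hk.2 hl.1 hl.2 hz hz')

lemma sum_P {N : ℕ} (hN : 0 < N) (d : ℝ) : ∑ k ∈ Finset.Icc 1 (2 * N), P d (band N k) = 1 := by
  have key : ∀ d, ∑ k ∈ Finset.Icc 1 (2 * N), P d (band N k)
      = (gaussianReal d 1).real (⋃ k ∈ Finset.Icc 1 (2 * N), band N k) := fun d =>
    (measureReal_biUnion_finset (disj_band N) (fun k _ => meas_band N k)).symm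
  have hm : MeasurableSet (⋃ k ∈ Finset.Icc 1 (2 * N), band N k) :=
    Finset.measurableSet_biUnion _ fun k _ => meas_band N k
  have hN' : (N : ℝ) ≠ 0 := by exact_mod_cast hN.ne'
  have h0 : ∑ k ∈ Finset.Icc 1 (2 * N), P 0 (band N k) = 1 := by
    rw [Finset.sum_congr rfl (g := fun _ => 1 / (2 * (N : ℝ)))]
    · simp; field_simp
    · intro k hk
      rw [Finset.mem_Icc] at hk
      exact P_band hk.1 hk.2
  rw [key] at h0 ⊢
  have h1 : gaussianReal 0 1 (⋃ k ∈ Finset.Icc 1 (2 * N), band N k)ᶜ = 0 := by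
    have := probReal_compl_eq_one_sub (μ := gaussianReal 0 1) hm
    rw [h0, sub_self, measureReal_eq_zero_iff] at this
    exact this
  have h2 := gaussianReal_absolutelyContinuous d one_ne_zero
    (gaussianReal_absolutelyContinuous' 0 one_ne_zero h1)
  have := probReal_compl_eq_one_sub (μ := gaussianReal d 1) hm
  rw [measureReal_def, h2, ENNReal.toReal_zero] at this
  linarith

lemma P_formula (d : ℝ) {S : Set ℝ} (hS : MeasurableSet S) :
    P d S = Real.exp (-d ^ 2 / 2) * ∫ z in S, Real.exp (d * z) ∂(gaussianReal 0 1) := by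
  have h1 : P d S = ∫ z, gaussianPDFReal d 1 z * S.indicator (fun _ => 1) z := by
    have := integral_gaussianReal_eq_integral_smul (μ := d) (v := 1) (f := S.indicator (fun _ => (1:ℝ)))
      one_ne_zero
    rw [integral_indicator hS] at this
    simpa [P] using this
  have h2 : ∫ z in S, Real.exp (d * z) ∂(gaussianReal 0 1)
      = ∫ z, gaussianPDFReal 0 1 z * S.indicator (fun z => Real.exp (d * z)) z := by
    rw [← integral_indicator hS]
    exact integral_gaussianReal_eq_integral_smul one_ne_zero
  rw [h1, h2, ← integral_const_mul]
  congr 1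
  funext z
  by_cases hz : z ∈ S
  · simp only [hz, indicator_of_mem, gaussianPDFReal]
    rw [mul_one, mul_left_comm, ← Real.exp_add, mul_assoc (Inv.inv _), ← Real.exp_add]
    congr 2
    push_cast; ring
  · simp [hz]

lemma int_exp (d : ℝ) (S : Set ℝ) :
    Integrable (fun z => Real.exp (d * z)) ((gaussianReal 0 1).restrict S) :=
  (integrable_exp_mul_gaussianReal d).restrict

lemma P_continuous {S : Set ℝ} (hS : MeasurableSet S) : Continuous fun d => P d S := by
  have h : (fun d => P d S)
      = fun d => Real.exp (-d ^ 2 / 2) * mgf id ((gaussianReal 0 1).restrict S) d := by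
    funext d
    exact P_formula d hS
  rw [h]
  have := continuous_mgf (X := id) (μ := (gaussianReal 0 1).restrict S) (fun t => int_exp t S)
  fun_prop

/-- Folded band probability. -/
noncomputable def q (N : ℕ) (d : ℝ) (k : ℕ) : ℝ := P d (band N k) + P (-d) (band N k)

lemma q_formula (N : ℕ) (d : ℝ) (k : ℕ) : q N d k = Real.exp (-d ^ 2 / 2) *
    ∫ z in band N k, 2 * Real.cosh (d * z) ∂(gaussianReal 0 1) := by
  rw [q, P_formula _ (meas_band N k), P_formula _ (meas_band N k), neg_sq, ← mul_add,
    ← integral_add (int_exp _ _) (int_exp _ _)]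
  congr 2
  funext z
  rw [Real.cosh_eq, neg_mul]; ring

lemma int_cosh (d : ℝ) (S : Set ℝ) :
    Integrable (fun z => 2 * Real.cosh (d * z)) ((gaussianReal 0 1).restrict S) := by
  refine ((int_exp d S).add (int_exp (-d) S)).congr (ae_of_all _ fun z => ?_)
  simp only [Pi.add_apply, Real.cosh_eq, neg_mul]; ring

lemma q_anti {N k l : ℕ} (h0 : 1 ≤ k) (hkl : k ≤ l) (hl : l ≤ N) (d : ℝ) :
    q N d l ≤ q N d k := by
  rcases hkl.eq_or_lt with rfl | hlt
  · exact le_rfl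
  have hN : (0 : ℝ) < 2 * N := by
    have : 0 < 2 * N := by omega
    exact_mod_cast this
  have ha := stdPhi_aseq (N := N) (k := k) (by omega) (by omega)
  set a := aseq N k
  have hlt' : (k : ℝ) + 1 ≤ l := by exact_mod_cast hlt
  have hl' : (l : ℝ) ≤ N := by exact_mod_cast hl
  have hc : ∀ {x y : ℝ}, y ≤ 0 → x ≤ y → 2 * Real.cosh (d * y) ≤ 2 * Real.cosh (d * x) := by
    intro x y hy hxy
    have : Real.cosh (d * y) ≤ Real.cosh (d * x) := by
      rw [Real.cosh_le_cosh, abs_mul, abs_mul, abs_of_nonpos hy, abs_of_nonpos (hxy.trans hy)]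
      gcongr
    linarith
  have hk2 : ∀ z ∈ band N k, 2 * Real.cosh (d * a) ≤ 2 * Real.cosh (d * z) := by
    intro z hz
    rw [mem_band h0 (by omega)] at hz
    refine hc ?_ ?_
    · rw [← stdPhi_strictMono.le_iff_le, ha, stdPhi_zero, div_le_div_iff₀ hN two_pos]
      linarith
    · rw [← stdPhi_strictMono.le_iff_le, ha]; exact hz.2.le
  have hl2 : ∀ z ∈ band N l, 2 * Real.cosh (d * z) ≤ 2 * Real.cosh (d * a) := by
    intro z hz
    rw [mem_band (by omega) (by omega)] at hz
    refine hc ?_ ?_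
    · rw [← stdPhi_strictMono.le_iff_le, stdPhi_zero]
      refine hz.2.le.trans ?_
      rw [div_le_div_iff₀ hN two_pos]
      linarith
    · rw [← stdPhi_strictMono.le_iff_le, ha]
      refine le_trans ?_ hz.1.le
      gcongr; linarith
  have e1 := setIntegral_mono_on (μ := gaussianReal 0 1) (integrable_const _).integrableOn
    (int_cosh d (band N k)) (meas_band N k) hk2
  have e2 := setIntegral_mono_on (μ := gaussianReal 0 1) (int_cosh d (band N l))
    (integrable_const _).integrableOn (meas_band N l) hl2
  have p1 := P_band (N := N) (k := k) (by omega) (by omega)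
  have p2 := P_band (N := N) (k := l) (by omega) (by omega)
  unfold P at p1 p2
  rw [setIntegral_const, p1] at e1
  rw [setIntegral_const, p2] at e2
  rw [q_formula, q_formula]
  exact mul_le_mul_of_nonneg_left (e2.trans e1) (Real.exp_pos _).le

lemma P_refl {N k : ℕ} (h0 : 1 ≤ k) (h1 : k ≤ 2 * N) (d : ℝ) :
    P d (band N (2 * N + 1 - k)) = P (-d) (band N k) := by
  rw [← neg_band h0 h1, P_neg _ (meas_band N k)]

lemma q_refl {N k : ℕ} (h0 : 1 ≤ k) (h1 : k ≤ 2 * N) (d : ℝ) :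
    q N d (2 * N + 1 - k) = q N d k := by
  rw [q, q, P_refl h0 h1, P_refl h0 h1, neg_neg, add_comm]

lemma q_min {N k : ℕ} (h0 : 1 ≤ k) (h1 : k ≤ 2 * N) (d : ℝ) :
    q N d (min k (2 * N + 1 - k)) = q N d k := by
  rcases min_choice k (2 * N + 1 - k) with h | h <;> rw [h]
  exact q_refl h0 h1 d

lemma power_eq (N : ℕ) (x y : ℝ) : ((gauss2 x y) (Rmm N)).toReal
    = ∑ k ∈ Finset.Icc 1 (2 * N), P x (band N k) * q N y k := by
  have h : Rmm N = ⋃ k ∈ Finset.Icc 1 (2 * N), band N k ×ˢ (band N k ∪ -(band N k)) := by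
    simp only [Rmm, Set.prod_union, Set.iUnion_union_distrib]
  have : IsFiniteMeasure (gauss2 x y) := by unfold gauss2; infer_instance
  rw [h, ← measureReal_def, measureReal_biUnion_finset]
  · refine Finset.sum_congr rfl fun k hk => ?_
    rw [Finset.mem_Icc] at hk
    rw [gauss2, measureReal_prod_prod, measureReal_union _ (meas_band N k).neg]
    · have := P_neg y (meas_band N k)
      unfold P at this
      rw [this]; rfl
    · rw [neg_band hk.1 hk.2, Set.disjoint_left]
      intro z hz hz'
      have := band_eq_of_mem hk.1 hk.2 (by omega) (by omega) hz hz'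
      omega
  · intro k hk l hl hkl
    exact (disj_band N hk hl hkl).set_prod_left _ _
  · exact fun k _ => (meas_band N k).prod ((meas_band N k).union (meas_band N k).neg)

lemma power_sym (N : ℕ) (x y : ℝ) : 2 * ((gauss2 x y) (Rmm N)).toReal
    = ∑ k ∈ Finset.Icc 1 (2 * N), q N x k * q N y k := by
  have h : ∑ k ∈ Finset.Icc 1 (2 * N), P x (band N k) * q N y k
      = ∑ k ∈ Finset.Icc 1 (2 * N), P (-x) (band N k) * q N y k := by
    refine Finset.sum_nbij' (fun k => 2 * N + 1 - k) (fun k => 2 * N + 1 - k) ?_ ?_ ?_ ?_ ?_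
    · intro k hk; simp only [Finset.mem_Icc] at *; omega
    · intro k hk; simp only [Finset.mem_Icc] at *; omega
    · intro k hk; simp only [Finset.mem_Icc] at *; omega
    · intro k hk; simp only [Finset.mem_Icc] at *; omega
    · intro k hk
      rw [Finset.mem_Icc] at hk
      rw [q_refl hk.1 hk.2, P_refl hk.1 hk.2, neg_neg]
  rw [power_eq, two_mul]
  nth_rw 2 [h]
  rw [← Finset.sum_add_distrib]
  exact Finset.sum_congr rfl fun k _ => by rw [← add_mul]; rfl

lemma sum_q {N : ℕ} (hN : 0 < N) (d : ℝ) : ∑ k ∈ Finset.Icc 1 (2 * N), q N d k = 2 := by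
  simp only [q, Finset.sum_add_distrib, sum_P hN]; norm_num

lemma power_ge {N : ℕ} (hN : 0 < N) (x y : ℝ) : 1 / (N : ℝ) ≤ ((gauss2 x y) (Rmm N)).toReal := by
  have hm : MonovaryOn (q N x) (q N y) (Finset.Icc 1 (2 * N) : Finset ℕ) := by
    intro i hi j hj hij
    simp only [Finset.coe_Icc, mem_Icc] at hi hj
    rw [← q_min hi.1 hi.2, ← q_min hj.1 hj.2] at hij ⊢
    rcases le_total (min i (2 * N + 1 - i)) (min j (2 * N + 1 - j)) with h | h
    · exact absurd (q_anti (by omega) h (by omega) y) (not_le.2 hij)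
    · exact q_anti (by omega) h (by omega) x
  have h := hm.sum_mul_sum_le_card_mul_sum
  rw [sum_q hN, sum_q hN, ← power_sym, Nat.card_Icc] at h
  have hN' : (0 : ℝ) < N := by exact_mod_cast hN
  rw [div_le_iff₀ hN']
  push_cast [Nat.add_sub_cancel] at h
  linarith

lemma power_zero {N : ℕ} (hN : 0 < N) (y : ℝ) : ((gauss2 0 y) (Rmm N)).toReal = 1 / (N : ℝ) := by
  rw [power_eq, Finset.sum_congr rfl (g := fun k => 1 / (2 * (N : ℝ)) * q N y k),
    ← Finset.mul_sum, sum_q hN]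
  · field_simp
  · intro k hk
    rw [Finset.mem_Icc] at hk
    rw [P_band hk.1 hk.2]

lemma power_cont (N : ℕ) (y : ℝ) : Continuous fun x => ((gauss2 x y) (Rmm N)).toReal := by
  simp only [power_eq]
  exact continuous_finsetSum _ fun k _ => (P_continuous (meas_band N k)).mul continuous_const

end MM

/-- For unit fraction α = 1/N, the infimum over the alternative {δ_x δ_y ≠ 0} of the
rejection probability of the minimax test equals α. -/
theorem stmt2 (N : ℕ) (hN : 0 < N) :
    sInf {p : ℝ | ∃ δx δy : ℝ, δx * δy ≠ 0 ∧ p = ((gauss2 δx δy) (Rmm N)).toReal}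
      = 1 / (N : ℝ) := by
  apply le_antisymm
  · have ht : Tendsto (fun x => ((gauss2 x 1) (Rmm N)).toReal) (nhdsWithin 0 {0}ᶜ)
        (nhds (1 / (N : ℝ))) := by
      rw [← MM.power_zero hN 1]
      exact ((MM.power_cont N 1).tendsto 0).mono_left nhdsWithin_le_nhds
    refine ge_of_tendsto ht ?_
    filter_upwards [self_mem_nhdsWithin] with x hx
    refine csInf_le ⟨0, ?_⟩ ⟨x, 1, by simpa using hx, rfl⟩
    rintro p ⟨_, _, _, rfl⟩
    exact ENNReal.toReal_nonneg
  · refine le_csInf ⟨_, 1, 1, by norm_num, rfl⟩ ?_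
    rintro p ⟨x, y, _, rfl⟩
    exact MM.power_ge hN x y
end

section
/- There is no measurable rejection region R ⊂ ℝ² that is bounded away from the coordinate axes {(x, y) : xy = 0} (i.e., for some ε > 0, R contains no point with |x| < ε or |y| < ε) and generates a similar test of H₀ : δ_x δ_y = 0 at level α ∈ (0, 1) for the statistic (Z_x, Z_y) ~ N((δ_x, δ_y), I₂). -/
open MeasureTheory ProbabilityTheory Set Filter Pointwise

lemma gaussianReal_shift (t : ℝ) : gaussianReal t 1 =
    (gaussianReal 0 1).withDensity (fun x => ENNReal.ofReal (Real.exp (t * x - t ^ 2 / 2))) := by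
  rw [gaussianReal_of_var_ne_zero _ one_ne_zero, gaussianReal_of_var_ne_zero _ one_ne_zero,
    ← withDensity_mul _ (measurable_gaussianPDF 0 1) (by fun_prop)]
  congr 1
  ext x
  simp only [Pi.mul_apply, gaussianPDF]
  rw [← ENNReal.ofReal_mul (gaussianPDFReal_nonneg _ _ _)]
  congr 1
  simp only [gaussianPDFReal, mul_assoc, ← Real.exp_add]
  congr 2
  push_cast
  ring

lemma gauss2_shift (t : ℝ) : gauss2 t 0 =
    (gauss2 0 0).withDensity (fun p => ENNReal.ofReal (Real.exp (t * p.1 - t ^ 2 / 2))) := by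
  unfold gauss2
  conv_lhs => rw [gaussianReal_shift t]
  exact prod_withDensity_left (by fun_prop)

instance gauss2_prob (a b : ℝ) : IsProbabilityMeasure (gauss2 a b) := by
  unfold gauss2; infer_instance

lemma gauss2_map_fst : (gauss2 0 0).map Prod.fst = gaussianReal 0 1 := by
  unfold gauss2
  exact (measurePreserving_fst).map_eq

/-- There is no measurable rejection region bounded away from the coordinate axes that
generates a similar test of H₀ : δ_x δ_y = 0 at level α ∈ (0, 1). -/
theorem stmt4 (α : ℝ) (hα : α ∈ Set.Ioo (0 : ℝ) 1) :
    ¬ ∃ R : Set (ℝ × ℝ), MeasurableSet R ∧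
      (∃ ε : ℝ, 0 < ε ∧ ∀ p ∈ R, ε ≤ |p.1| ∧ ε ≤ |p.2|) ∧
      (∀ δx δy : ℝ, δx * δy = 0 → ((gauss2 δx δy) R).toReal = α) := by
  rintro ⟨R, hR, ⟨ε, hε, hbd⟩, hsim⟩
  set μ := gauss2 0 0 with hμ
  set c : ENNReal := ENNReal.ofReal α with hc
  have hc0 : c ≠ 0 := by simpa [hc] using hα.1
  have h1 (t : ℝ) : mgf Prod.fst (μ.restrict R) t = α * Real.exp (t ^ 2 / 2) := by
    have h := hsim t 0 (by simp)
    rw [gauss2_shift, withDensity_apply _ hR,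
      ← integral_eq_lintegral_of_nonneg_ae (ae_of_all _ fun _ => (Real.exp_pos _).le)
        (by fun_prop)] at h
    simp only [sub_eq_add_neg, Real.exp_add] at h
    rw [integral_mul_const] at h
    rw [← h, mgf, mul_assoc, ← Real.exp_add]
    simp [hμ]
  have h2 (t : ℝ) : mgf Prod.fst (c • μ) t = α * Real.exp (t ^ 2 / 2) := by
    have h := mgf_gaussianReal gauss2_map_fst t
    simp only [mgf] at h ⊢
    rw [integral_smul_measure, hμ, h, hc, ENNReal.toReal_ofReal hα.1.le]
    simp
  have hμ0 : c • μ ≠ 0 := by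
    intro h
    have := h2 0
    rw [h] at this
    simp at this
    exact hα.1.ne this
  have hν0 : μ.restrict R ≠ 0 := by
    intro h
    have := h1 0
    rw [h] at this
    simp at this
    exact hα.1.ne this
  have huniv : integrableExpSet Prod.fst (c • μ) = Set.univ := by
    ext t
    have : NeZero (c • μ) := ⟨hμ0⟩
    simp only [integrableExpSet, Set.mem_ofPred_eq, Set.mem_univ, iff_true]
    rw [← mgf_pos_iff, h2]
    exact mul_pos hα.1 (Real.exp_pos _)
  have heq := eqOn_complexMGF_of_mgf' (X := Prod.fst) (Y := Prod.fst) (μ := c • μ)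
    (μ' := μ.restrict R) (funext fun t => by rw [h1, h2]) (by simp only [hμ0, hν0])
  have : IsFiniteMeasure (c • μ) := Measure.smul_finite _ ENNReal.ofReal_ne_top
  have hmap := Measure.ext_of_complexMGF_eq (μ := c • μ) (μ' := μ.restrict R)
    measurable_fst.aemeasurable measurable_fst.aemeasurable
    (funext fun z => heq (by simp [huniv]))
  have hI := congrArg (fun m => m (Ioo (-ε) ε)) hmap
  simp only [Measure.map_smul] at hI
  rw [hμ, gauss2_map_fst, Measure.map_apply measurable_fst measurableSet_Ioo,
    Measure.restrict_apply (measurable_fst measurableSet_Ioo)] at hI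
  have hemp : (Prod.fst ⁻¹' Ioo (-ε) ε ∩ R : Set (ℝ × ℝ)) = ∅ := by
    ext p
    simp only [mem_inter_iff, mem_preimage, mem_Ioo, mem_empty_iff_false, iff_false, not_and]
    intro h hp
    exact absurd (abs_lt.2 h) (not_lt.2 (hbd p hp).1)
  rw [hemp, measure_empty, Measure.smul_apply, smul_eq_mul, mul_eq_zero] at hI
  have hz := hI.resolve_left hc0
  have hv := gaussianReal_absolutelyContinuous' 0 one_ne_zero hz
  rw [Real.volume_Ioo, ENNReal.ofReal_eq_zero] at hv
  linarith
end
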